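/- Let F be a Ferrers diagram of semiperimeter n+1, T ∈ EWtab(F), and S = S(T) its supplementary tableau. Let j ∈ rows(F) and k ∈ cols(F) with j > k. Then S_{jk} = 0 if and only if there exists k' ∈ cols(F) with k' > j such that T_{jk'} = 0 and, for every j' ∈ rows(F) with j' < k, if T_{j'k'} = 0 then T_{j'k} = 0. Otherwise S_{jk} = 1. -/

import Mathlib

open Classical

/-- A Ferrers diagram of semiperimeter `n + 1`, encoded by the set of its row labels
(labels `0, …, n` run along the south-east border; `0` labels the top row and the
last label `n` is a column label). -/
structure Ferrers (n : ℕ) where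
  rows : Finset (Fin (n + 1))
  zero_mem : 0 ∈ rows
  last_not_mem : Fin.last n ∉ rows

namespace Ferrers

/-- `(i, j)` is a cell of the diagram: `i` is a row label, `j` a column label, `i < j`. -/
def Cell {n : ℕ} (F : Ferrers n) (i j : Fin (n + 1)) : Prop :=
  i ∈ F.rows ∧ j ∉ F.rows ∧ i < j

/-- Adjacency in the Ferrers graph `G(F)`. -/
def Adj {n : ℕ} (F : Ferrers n) (u v : Fin (n + 1)) : Prop :=
  F.Cell u v ∨ F.Cell v u

/-- Degree of a vertex in `G(F)`. -/
noncomputable def deg {n : ℕ} (F : Ferrers n) (v : Fin (n + 1)) : ℕ :=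
  {u | F.Adj v u}.ncard

/-- Toppling a single vertex.  The height at the sink `0` is kept equal to `c 0`
(grains sent to the sink vanish); toppling the sink sends one grain to each of
its neighbours. -/
noncomputable def topple {n : ℕ} (F : Ferrers n) (c : Fin (n + 1) → ℕ)
    (v : Fin (n + 1)) : Fin (n + 1) → ℕ :=
  fun u =>
    if u = 0 then c 0
    else if u = v then c v - F.deg v
    else if F.Adj v u then c u + 1
    else c u

/-- Toppling the vertices of a list in order. -/
noncomputable def toppleList {n : ℕ} (F : Ferrers n) (c : Fin (n + 1) → ℕ)
    (l : List (Fin (n + 1))) : Fin (n + 1) → ℕ :=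
  l.foldl F.topple c

/-- Simultaneous toppling of a set of vertices. -/
noncomputable def toppleSet {n : ℕ} (F : Ferrers n) (c : Fin (n + 1) → ℕ)
    (S : Set (Fin (n + 1))) : Fin (n + 1) → ℕ :=
  fun u =>
    if u = 0 then c 0
    else c u + {w ∈ S | F.Adj w u}.ncard - if u ∈ S then F.deg u else 0

/-- A configuration is stable if every non-sink vertex has fewer grains than its degree. -/
def Stable {n : ℕ} (F : Ferrers n) (c : Fin (n + 1) → ℕ) : Prop :=
  ∀ v, v ≠ 0 → c v < F.deg v

/-- A Dhar (burning) ordering for `c`: an ordering `v₀ = 0, v₁, …, vₙ` of all the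
vertices such that each `vᵢ` (`i ≥ 1`) is unstable after toppling `v₀, …, v_{i-1}`. -/
def DharSeq {n : ℕ} (F : Ferrers n) (c : Fin (n + 1) → ℕ) (l : List (Fin (n + 1))) : Prop :=
  l.length = n + 1 ∧ l.Nodup ∧ l.head? = some 0 ∧
    ∀ i, ∀ h : i < l.length, 1 ≤ i →
      F.deg (l.get ⟨i, h⟩) ≤ F.toppleList c (l.take i) (l.get ⟨i, h⟩)

/-- Recurrent configurations (via Dhar's criterion).  The height at the sink is
normalised to `0`. -/
def Recurrent {n : ℕ} (F : Ferrers n) (c : Fin (n + 1) → ℕ) : Prop :=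
  c 0 = 0 ∧ F.Stable c ∧ ∃ l, F.DharSeq c l

/-- Minimal recurrent configurations: recurrent with minimal total number of grains. -/
def RecMin {n : ℕ} (F : Ferrers n) (c : Fin (n + 1) → ℕ) : Prop :=
  F.Recurrent c ∧ ∀ c', F.Recurrent c' → (∑ v, c v) ≤ ∑ v, c' v

/-- Canonical toppling: block `0` is `{0}` (the sink); from then on, blocks with odd
index are the sets of currently unstable column vertices and blocks with even index
the sets of currently unstable row vertices.  The first component is the configuration
just before toppling the block recorded in the second component. -/
noncomputable def canonAux {n : ℕ} (F : Ferrers n) (c : Fin (n + 1) → ℕ) :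
    ℕ → ((Fin (n + 1) → ℕ) × Set (Fin (n + 1)))
  | 0 => (c, {0})
  | k + 1 =>
    let c' := F.toppleSet (canonAux F c k).1 (canonAux F c k).2
    (c', {v | v ≠ 0 ∧ (if k % 2 = 0 then v ∉ F.rows else v ∈ F.rows) ∧ F.deg v ≤ c' v})

/-- The `k`-th block of the canonical toppling of `c`:
`canonTop F c 0 = U⁰ = {0}`, `canonTop F c (2i-1) = Vⁱ`, `canonTop F c (2i) = Uⁱ`. -/
noncomputable def canonTop {n : ℕ} (F : Ferrers n) (c : Fin (n + 1) → ℕ) (k : ℕ) :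
    Set (Fin (n + 1)) :=
  (F.canonAux c k).2

/-- The configuration just before toppling the `k`-th block of the canonical toppling. -/
noncomputable def canonConfig {n : ℕ} (F : Ferrers n) (c : Fin (n + 1) → ℕ) (k : ℕ) :
    Fin (n + 1) → ℕ :=
  (F.canonAux c k).1

/-- The index of the block of the canonical toppling of `c` containing `v`. -/
noncomputable def bIdx {n : ℕ} (F : Ferrers n) (c : Fin (n + 1) → ℕ) (v : Fin (n + 1)) : ℕ :=
  sInf {k | v ∈ F.canonTop c k}

/-- `T` is a EW-tableau on `F` (entries of non-cells are normalised to `false`):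
the top row contains only `1`s, every other row contains a `0`, and there is no
rectangle with two diagonally opposite `0`s and two `1`s in the other corners. -/
def IsEW {n : ℕ} (F : Ferrers n) (T : Fin (n + 1) → Fin (n + 1) → Bool) : Prop :=
  (∀ i j, ¬F.Cell i j → T i j = false) ∧
  (∀ j, F.Cell 0 j → T 0 j = true) ∧
  (∀ i, i ∈ F.rows → i ≠ 0 → ∃ j, F.Cell i j ∧ T i j = false) ∧
  (∀ i i' j j', F.Cell i j → F.Cell i j' → F.Cell i' j → F.Cell i' j' →
    T i j = T i' j' → T i j' = T i' j → T i j = T i j')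

/-- The configuration associated to a tableau: row vertices count the `1`s in their
row, column vertices count the `0`s in their column (the sink is normalised to `0`). -/
noncomputable def phiTC {n : ℕ} (F : Ferrers n) (T : Fin (n + 1) → Fin (n + 1) → Bool) :
    Fin (n + 1) → ℕ :=
  fun v =>
    if v = 0 then 0
    else if v ∈ F.rows then {j | F.Cell v j ∧ T v j = true}.ncard
    else {i | F.Cell i v ∧ T i v = false}.ncard

/-- The tableau associated to a (minimal recurrent) configuration: a cell `(i, j)`
gets a `1` exactly when `i` lies in an earlier block than `j` in the canonical
toppling of `c`. -/
noncomputable def phiCT {n : ℕ} (F : Ferrers n) (c : Fin (n + 1) → ℕ) :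
    Fin (n + 1) → Fin (n + 1) → Bool :=
  fun i j => if F.Cell i j ∧ F.bIdx c i < F.bIdx c j then true else false

/-- The supplementary tableau of `T`: `S i j = 1` exactly when the row vertex `i`
lies in an earlier block than the column vertex `j` in `CanonTop (φ_TC T)`. -/
noncomputable def suppS {n : ℕ} (F : Ferrers n) (T : Fin (n + 1) → Fin (n + 1) → Bool)
    (i j : Fin (n + 1)) : Bool :=
  if F.bIdx (F.phiTC T) i < F.bIdx (F.phiTC T) j then true else false

/-- The entry of `T` in cell `(j, k)` is a cornersupport entry. -/
def Cornersupport {n : ℕ} (F : Ferrers n) (T : Fin (n + 1) → Fin (n + 1) → Bool)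
    (j k : Fin (n + 1)) : Prop :=
  ∃ j' k', j' ∈ F.rows ∧ k' ∉ F.rows ∧ j' ≠ j ∧ k' ≠ k ∧
    F.suppS T j' k' = !(T j k) ∧ F.suppS T j' k = T j k ∧ F.suppS T j k' = T j k

/-- `ν_v(T)`: the number of non-cornersupport `0`s in row `v` (if `v` is a row label),
resp. non-cornersupport `1`s in column `v` (if `v` is a column label). -/
noncomputable def nu {n : ℕ} (F : Ferrers n) (T : Fin (n + 1) → Fin (n + 1) → Bool)
    (v : Fin (n + 1)) : ℕ :=
  if v ∈ F.rows then {k | F.Cell v k ∧ T v k = false ∧ ¬F.Cornersupport T v k}.ncard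
  else {i | F.Cell i v ∧ T i v = true ∧ ¬F.Cornersupport T i v}.ncard

/-- `μ_v(c)`: if `v ∈ Uⁱ`, the number of `k ∈ Vⁱ` with `k > v`; if `v ∈ Vⁱ`,
the number of `k ∈ U^{i-1}` with `k < v`.  In both cases the relevant block is the
one immediately preceding the block of `v`. -/
noncomputable def mu {n : ℕ} (F : Ferrers n) (c : Fin (n + 1) → ℕ) (v : Fin (n + 1)) : ℕ :=
  if v ∈ F.rows then {k | v < k ∧ k ∈ F.canonTop c (F.bIdx c v - 1)}.ncard
  else {k | k < v ∧ k ∈ F.canonTop c (F.bIdx c v - 1)}.ncard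

/-- The minimal recurrent configuration with the same canonical toppling as `c`:
if `j ∈ Uⁱ` then `minrec c j = |{ℓ ∈ Vᵏ : j < ℓ, k > i}|`, and if `j ∈ Vⁱ` then
`minrec c j = |{ℓ ∈ Uᵏ : ℓ < j, k ≥ i}|` (blocks `Vᵏ` sit at odd index `2k - 1`,
blocks `Uᵏ` at even index `2k`). -/
noncomputable def minrecFun {n : ℕ} (F : Ferrers n) (c : Fin (n + 1) → ℕ) :
    Fin (n + 1) → ℕ :=
  fun j =>
    if j = 0 then 0
    else if j ∈ F.rows then
      {l | j < l ∧ ∃ k, F.bIdx c j < 2 * k + 1 ∧ l ∈ F.canonTop c (2 * k + 1)}.ncard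
    else
      {l | l < j ∧ ∃ k, F.bIdx c j < 2 * k ∧ l ∈ F.canonTop c (2 * k)}.ncard

/-- The number of edges of `G(F)` (equivalently, the number of cells of `F`). -/
noncomputable def edgeCount {n : ℕ} (F : Ferrers n) : ℕ :=
  {p : Fin (n + 1) × Fin (n + 1) | F.Cell p.1 p.2}.ncard

end Ferrers

namespace Ferrers

variable {n : ℕ} {F : Ferrers n} {T : Fin (n + 1) → Fin (n + 1) → Bool}

/-- The orientation of `G(F)` encoded by a tableau: a `1` in a cell orients the edge from
its row to its column, a `0` from its column to its row. -/
def Arc (F : Ferrers n) (T : Fin (n + 1) → Fin (n + 1) → Bool) (u v : Fin (n + 1)) : Prop :=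
  (F.Cell u v ∧ T u v = true) ∨ (F.Cell v u ∧ T v u = false)

/-- The vertices toppled before step `k` of the canonical toppling. -/
def toppledBefore (F : Ferrers n) (c : Fin (n + 1) → ℕ) (k : ℕ) : Set (Fin (n + 1)) :=
  {v | ∃ m < k, v ∈ F.canonTop c m}

theorem adj_iff_arc (u v : Fin (n + 1)) : F.Adj u v ↔ F.Arc T u v ∨ F.Arc T v u := by
  unfold Adj Arc
  cases T u v <;> cases T v u <;> simp [or_comm]

theorem adj_comm (u v : Fin (n + 1)) : F.Adj u v ↔ F.Adj v u := or_comm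

theorem Arc.asymm {u v : Fin (n + 1)} (h : F.Arc T u v) : ¬F.Arc T v u := by
  intro h'
  unfold Arc Cell at *
  grind

theorem Arc.rows_iff {u v : Fin (n + 1)} (h : F.Arc T u v) : u ∈ F.rows ↔ v ∉ F.rows := by
  unfold Arc Cell at h
  tauto

theorem IsEW.not_arc_zero (hT : F.IsEW T) (u : Fin (n + 1)) : ¬F.Arc T u 0 := by
  rintro (⟨⟨_, h, _⟩, _⟩ | ⟨h, h'⟩)
  · exact h F.zero_mem
  · simp [hT.2.1 u h] at h'

theorem IsEW.exists_arc (hT : F.IsEW T) {v : Fin (n + 1)} (hv : v ≠ 0) :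
    ∃ u, F.Arc T u v := by
  by_cases h : v ∈ F.rows
  · obtain ⟨j, hj⟩ := hT.2.2.1 v h hv
    exact ⟨j, Or.inr hj⟩
  · have hc : F.Cell 0 v := ⟨F.zero_mem, h, Fin.pos_of_ne_zero hv⟩
    exact ⟨0, Or.inl ⟨hc, hT.2.1 v hc⟩⟩

/-- The orientation encoded by an EW-tableau is acyclic: every nonempty set of vertices
contains a vertex with no incoming arc from that set. -/
theorem IsEW.exists_source (hT : F.IsEW T) (X : Finset (Fin (n + 1))) (hX : X.Nonempty) :
    ∃ s ∈ X, ∀ u ∈ X, ¬F.Arc T u s := by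
  induction X using Finset.strongInduction with
  | H X ih =>
  by_cases hC : (X.filter (· ∉ F.rows)).Nonempty
  · obtain ⟨k, hk, hmin⟩ := Finset.exists_min_image _ id hC
    simp only [Finset.mem_filter, id] at hk hmin
    by_cases hsrc : ∀ u ∈ X, ¬F.Arc T u k
    · exact ⟨k, hk.1, hsrc⟩
    push Not at hsrc
    obtain ⟨i', hi'X, hi'⟩ := hsrc
    have hne : i' ≠ k := by
      rintro rfl
      exact hi'.asymm hi'
    obtain ⟨s, hs, hs'⟩ := ih (X.erase k) (Finset.erase_ssubset hk.1)
      ⟨i', Finset.mem_erase.2 ⟨hne, hi'X⟩⟩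
    rw [Finset.mem_erase] at hs
    have hs'' : ∀ u ∈ X, u ≠ k → ¬F.Arc T u s := fun u hu huk =>
      hs' u (Finset.mem_erase.2 ⟨huk, hu⟩)
    by_cases hks : F.Arc T k s
    · refine ⟨i', hi'X, fun u hu hui => ?_⟩
      have hi'r : i' ∈ F.rows := hi'.rows_iff.2 hk.2
      have hur : u ∉ F.rows := by
        have := hui.rows_iff
        tauto
      have huk : u ≠ k := by
        rintro rfl
        exact hi'.asymm hui
      have hku := hmin u ⟨hu, hur⟩
      have hsu := hs'' u hu huk
      have hrect := hT.2.2.2 s i' k u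
      have hlt := lt_of_le_of_ne hku huk.symm
      unfold Arc Cell at *
      grind
    · exact ⟨s, hs.2, fun u hu hus => by
        by_cases huk : u = k
        · exact hks (huk ▸ hus)
        · exact hs'' u hu huk hus⟩
  · obtain ⟨s, hs⟩ := hX
    refine ⟨s, hs, fun u hu hus => hC ?_⟩
    have := hus.rows_iff
    by_cases hsr : s ∈ F.rows
    · exact ⟨u, Finset.mem_filter.2 ⟨hu, by tauto⟩⟩
    · exact ⟨s, Finset.mem_filter.2 ⟨hs, hsr⟩⟩

theorem IsEW.wellFounded_arc (hT : F.IsEW T) : WellFounded (F.Arc T) := by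
  rw [WellFounded.wellFounded_iff_has_min]
  intro s hs
  obtain ⟨m, hm, h⟩ := hT.exists_source s.toFinset (Set.toFinset_nonempty.2 hs)
  exact ⟨m, by simpa using hm, fun x hx => h x (by simpa using hx)⟩

theorem phiTC_eq_outdegree {v : Fin (n + 1)} (hv : v ≠ 0) :
    F.phiTC T v = {u | F.Arc T v u}.ncard := by
  unfold phiTC
  rw [if_neg hv]
  split_ifs with h <;>
  · congr 1
    ext u
    simp only [Set.mem_ofPred_eq, Arc, Cell]
    tauto

theorem deg_eq_indegree_add_phiTC {v : Fin (n + 1)} (hv : v ≠ 0) :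
    F.deg v = {u | F.Arc T u v}.ncard + F.phiTC T v := by
  rw [phiTC_eq_outdegree hv, ← Set.ncard_union_eq]
  · unfold deg
    congr 1
    ext u
    simp [adj_iff_arc (T := T), or_comm]
  · rw [Set.disjoint_left]
    exact fun u hu => Arc.asymm hu

theorem toppledBefore_succ (c : Fin (n + 1) → ℕ) (k : ℕ) :
    F.toppledBefore c (k + 1) = F.toppledBefore c k ∪ F.canonTop c k := by
  ext v
  simp only [toppledBefore, Set.mem_ofPred_eq, Set.mem_union]
  grind

theorem mem_canonTop_succ (c : Fin (n + 1) → ℕ) (k : ℕ) (v : Fin (n + 1)) :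
    v ∈ F.canonTop c (k + 1) ↔
      v ≠ 0 ∧ (k % 2 = 0 ↔ v ∉ F.rows) ∧ F.deg v ≤ F.canonConfig c (k + 1) v := by
  change (v ≠ 0 ∧ (if k % 2 = 0 then v ∉ F.rows else v ∈ F.rows) ∧ _) ↔ _
  refine and_congr_right fun _ => and_congr ?_ Iff.rfl
  split_ifs <;> tauto

theorem canonConfig_succ (c : Fin (n + 1) → ℕ) (k : ℕ) {v : Fin (n + 1)} (hv : v ≠ 0) :
    F.canonConfig c (k + 1) v = F.canonConfig c k v +
      {w ∈ F.canonTop c k | F.Adj w v}.ncard - if v ∈ F.canonTop c k then F.deg v else 0 :=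
  if_neg hv

/-- The configuration reached by the canonical toppling from `c` at step `k` is `c` with every
previously toppled vertex toppled once, and these vertices are closed under predecessors. -/
structure ToppleInvariant (F : Ferrers n) (T : Fin (n + 1) → Fin (n + 1) → Bool) (k : ℕ) :
    Prop where
  config : ∀ v, v ≠ 0 → F.canonConfig (F.phiTC T) k v +
    (if v ∈ F.toppledBefore (F.phiTC T) k then F.deg v else 0) =
      F.phiTC T v + {w ∈ F.toppledBefore (F.phiTC T) k | F.Adj w v}.ncard
  closed : ∀ u v, F.Arc T u v → v ∈ F.toppledBefore (F.phiTC T) k →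
    u ∈ F.toppledBefore (F.phiTC T) k

theorem ToppleInvariant.unstable_iff (hT : F.IsEW T) {k : ℕ} (h : F.ToppleInvariant T k)
    {v : Fin (n + 1)} (hv : v ≠ 0) :
    F.deg v ≤ F.canonConfig (F.phiTC T) k v ↔
      v ∉ F.toppledBefore (F.phiTC T) k ∧
        ∀ u, F.Arc T u v → u ∈ F.toppledBefore (F.phiTC T) k := by
  have hc := h.config v hv
  have hd := deg_eq_indegree_add_phiTC (F := F) (T := T) hv
  by_cases hvA : v ∈ F.toppledBefore (F.phiTC T) k
  · have hle : {w ∈ F.toppledBefore (F.phiTC T) k | F.Adj w v}.ncard ≤ F.deg v :=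
      Set.ncard_le_ncard (fun w hw => (adj_comm _ _).1 hw.2) (Set.toFinite _)
    have hpos : 0 < {u | F.Arc T u v}.ncard :=
      (Set.ncard_pos (Set.toFinite _)).2 (hT.exists_arc hv)
    simp only [hvA, if_true, not_true_eq_false, false_and, iff_false] at hc ⊢
    omega
  · have hsub : {w ∈ F.toppledBefore (F.phiTC T) k | F.Adj w v} ⊆ {u | F.Arc T u v} := by
      rintro w ⟨hwA, hw⟩
      rcases (adj_iff_arc (T := T) w v).1 hw with hw | hw
      · exact hw
      · exact absurd (h.closed v w hw hwA) hvA
    simp only [hvA, if_false, not_false_eq_true, true_and] at hc ⊢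
    constructor
    · intro hle u hu
      have heq := Set.eq_of_subset_of_ncard_le hsub (by omega) (Set.toFinite _)
      have hu' : u ∈ {u | F.Arc T u v} := hu
      rw [← heq] at hu'
      exact hu'.1
    · intro hall
      have : {w ∈ F.toppledBefore (F.phiTC T) k | F.Adj w v} = {u | F.Arc T u v} :=
        hsub.antisymm fun u hu => ⟨hall u hu, (adj_iff_arc u v).2 (Or.inl hu)⟩
      rw [this] at hc
      omega

theorem IsEW.toppleInvariant (hT : F.IsEW T) (k : ℕ) : F.ToppleInvariant T k := by
  induction k with
  | zero => exact ⟨fun v _ => by simp [toppledBefore, canonConfig, canonAux],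
      fun u v _ h => by simp [toppledBefore] at h⟩
  | succ k ih =>
    have htop : ∀ v ∈ F.canonTop (F.phiTC T) k, v ∉ F.toppledBefore (F.phiTC T) k ∧
        (∀ u, F.Arc T u v → u ∈ F.toppledBefore (F.phiTC T) k) ∧
        (v ≠ 0 → F.deg v ≤ F.canonConfig (F.phiTC T) k v) := by
      intro v hv
      cases k with
      | zero =>
        obtain rfl : v = 0 := hv
        exact ⟨by simp [toppledBefore], fun u hu => absurd hu (hT.not_arc_zero u),
          fun h => absurd rfl h⟩
      | succ k =>
        obtain ⟨hv0, _, hle⟩ := (mem_canonTop_succ _ _ _).1 hv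
        have := (ih.unstable_iff hT hv0).1 hle
        exact ⟨this.1, this.2, fun _ => hle⟩
    constructor
    · intro v hv
      have hc := ih.config v hv
      have hsplit : {w ∈ F.toppledBefore (F.phiTC T) (k + 1) | F.Adj w v}.ncard =
          {w ∈ F.toppledBefore (F.phiTC T) k | F.Adj w v}.ncard +
            {w ∈ F.canonTop (F.phiTC T) k | F.Adj w v}.ncard := by
        rw [← Set.ncard_union_eq]
        · congr 1
          ext w
          simp only [toppledBefore_succ, Set.mem_ofPred_eq, Set.mem_union]
          tauto
        · rw [Set.disjoint_left]
          exact fun w hw hw' => (htop w hw'.1).1 hw.1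
      rw [hsplit, canonConfig_succ _ _ hv, toppledBefore_succ]
      by_cases hvB : v ∈ F.canonTop (F.phiTC T) k
      · have := htop v hvB
        have hle := this.2.2 hv
        simp only [Set.mem_union, hvB, this.1, or_true, if_true, if_false] at hc ⊢
        omega
      · simp only [Set.mem_union, hvB, or_false, if_false]
        omega
    · intro u v huv hv
      rw [toppledBefore_succ] at hv ⊢
      rcases hv with hv | hv
      · exact Or.inl (ih.closed u v huv hv)
      · exact Or.inl ((htop v hv).2.1 u huv)

theorem IsEW.mem_canonTop_succ_iff (hT : F.IsEW T) (k : ℕ) (v : Fin (n + 1)) :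
    v ∈ F.canonTop (F.phiTC T) (k + 1) ↔ v ≠ 0 ∧ (k % 2 = 0 ↔ v ∉ F.rows) ∧
      v ∉ F.toppledBefore (F.phiTC T) (k + 1) ∧
        ∀ u, F.Arc T u v → u ∈ F.toppledBefore (F.phiTC T) (k + 1) := by
  rw [mem_canonTop_succ]
  exact and_congr_right fun hv => and_congr_right fun _ =>
    (hT.toppleInvariant _).unstable_iff hT hv

theorem bIdx_le {c : Fin (n + 1) → ℕ} {k : ℕ} {v : Fin (n + 1)} (h : v ∈ F.canonTop c k) :
    F.bIdx c v ≤ k :=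
  Nat.sInf_le h

theorem bIdx_lt_of_mem_toppledBefore {c : Fin (n + 1) → ℕ} {k : ℕ} {v : Fin (n + 1)}
    (h : v ∈ F.toppledBefore c k) : F.bIdx c v < k := by
  obtain ⟨m, hm, hv⟩ := h
  exact (bIdx_le hv).trans_lt hm

theorem IsEW.exists_mem_canonTop (hT : F.IsEW T) (v : Fin (n + 1)) :
    ∃ k, v ∈ F.canonTop (F.phiTC T) k := by
  induction v using hT.wellFounded_arc.induction with
  | _ v ih =>
  by_cases hv : v = 0
  · exact ⟨0, hv⟩
  choose! f hf using ih
  obtain ⟨N, hN⟩ : ∃ N, ∀ u, f u < N := by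
    obtain ⟨M, hM⟩ := (Set.finite_range f).bddAbove
    exact ⟨M + 1, fun u => Nat.lt_succ_of_le (hM ⟨u, rfl⟩)⟩
  obtain ⟨m, hNm, hm⟩ : ∃ m, N ≤ m ∧ (m % 2 = 0 ↔ v ∉ F.rows) := by
    by_cases hr : v ∈ F.rows
    · exact ⟨2 * N + 1, by omega, by simp [hr]⟩
    · exact ⟨2 * N, by omega, by simp [hr]⟩
  by_cases hA : v ∈ F.toppledBefore (F.phiTC T) (m + 1)
  · obtain ⟨k, _, hk⟩ := hA
    exact ⟨k, hk⟩
  · exact ⟨m + 1, (hT.mem_canonTop_succ_iff m v).2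
      ⟨hv, hm, hA, fun u hu => ⟨f u, by have := hN u; omega, hf u hu⟩⟩⟩

theorem IsEW.mem_canonTop_bIdx (hT : F.IsEW T) (v : Fin (n + 1)) :
    v ∈ F.canonTop (F.phiTC T) (F.bIdx (F.phiTC T) v) :=
  Nat.sInf_mem (hT.exists_mem_canonTop v)

theorem IsEW.bIdx_even_iff (hT : F.IsEW T) (v : Fin (n + 1)) :
    F.bIdx (F.phiTC T) v % 2 = 0 ↔ v ∈ F.rows := by
  have h := hT.mem_canonTop_bIdx v
  cases hb : F.bIdx (F.phiTC T) v with
  | zero =>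
    rw [hb] at h
    obtain rfl : v = 0 := h
    simp [F.zero_mem]
  | succ m =>
    rw [hb, mem_canonTop_succ] at h
    have := h.2.1
    by_cases hr : v ∈ F.rows <;> simp only [hr] at this ⊢ <;> simp at this ⊢ <;> omega

theorem IsEW.bIdx_lt_of_arc (hT : F.IsEW T) {u v : Fin (n + 1)} (h : F.Arc T u v) :
    F.bIdx (F.phiTC T) u < F.bIdx (F.phiTC T) v := by
  have hv := hT.mem_canonTop_bIdx v
  cases hb : F.bIdx (F.phiTC T) v with
  | zero =>
    rw [hb] at hv
    obtain rfl : v = 0 := hv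
    exact absurd h (hT.not_arc_zero u)
  | succ m =>
    rw [hb, hT.mem_canonTop_succ_iff] at hv
    exact bIdx_lt_of_mem_toppledBefore (hv.2.2.2 u h)

/-- A vertex topples at the latest at the first step of the right parity after all of its
predecessors have toppled. -/
theorem IsEW.bIdx_le_of_forall_arc (hT : F.IsEW T) {v : Fin (n + 1)} (hv : v ≠ 0) {m : ℕ}
    (hm : m % 2 = 0 ↔ v ∈ F.rows)
    (h : ∀ u, F.Arc T u v → F.bIdx (F.phiTC T) u < m) : F.bIdx (F.phiTC T) v ≤ m := by
  cases m with
  | zero =>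
    obtain ⟨u, hu⟩ := hT.exists_arc hv
    exact absurd (h u hu) (Nat.not_lt_zero _)
  | succ m =>
    by_cases hA : v ∈ F.toppledBefore (F.phiTC T) (m + 1)
    · exact (bIdx_lt_of_mem_toppledBefore hA).le
    · refine bIdx_le ((hT.mem_canonTop_succ_iff m v).2 ⟨hv, ?_, hA, fun u hu =>
        ⟨_, h u hu, hT.mem_canonTop_bIdx u⟩⟩)
      rw [← hm]
      omega

end Ferrers

/-- **Proposition.** Let `j` be a row and `k` a column with `k < j`
(so `(j, k)` is not a cell of `F`).  Then `S_{jk} = 0` if and only if there is a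
column `k' > j` with `T_{jk'} = 0` such that every row `j' < k` with `T_{j'k'} = 0`
also has `T_{j'k} = 0`; otherwise `S_{jk} = 1`. -/
theorem suppS_eq_zero_iff {n : ℕ} (F : Ferrers n)
    (T : Fin (n + 1) → Fin (n + 1) → Bool) (hT : F.IsEW T)
    (j k : Fin (n + 1)) (hj : j ∈ F.rows) (hk : k ∉ F.rows) (hkj : k < j) :
    F.suppS T j k = false ↔
      ∃ k' : Fin (n + 1), k' ∉ F.rows ∧ j < k' ∧ T j k' = false ∧
        ∀ j' : Fin (n + 1), j' ∈ F.rows → j' < k → T j' k' = false → T j' k = false := by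
  have hk0 : k ≠ 0 := fun h => hk (h ▸ F.zero_mem)
  have hj0 : j ≠ 0 := Fin.ne_zero_of_lt hkj
  have hpj := hT.bIdx_even_iff j
  have hpk := hT.bIdx_even_iff k
  simp only [hj, hk, iff_true, iff_false] at hpj hpk
  have hS : F.suppS T j k = false ↔ F.bIdx (F.phiTC T) k < F.bIdx (F.phiTC T) j := by
    unfold Ferrers.suppS
    split_ifs with h
    · simp [h.le]
    · simp only [true_iff]
      omega
  rw [hS]
  constructor
  · intro hlt
    obtain ⟨k', hk', hle⟩ : ∃ k', F.Arc T k' j ∧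
        F.bIdx (F.phiTC T) k ≤ F.bIdx (F.phiTC T) k' := by
      by_contra! hno
      have := hT.bIdx_le_of_forall_arc hj0 (m := F.bIdx (F.phiTC T) k - 1)
        (by simp only [hj, iff_true]; omega) (fun u hu => by
          have h1 := hno u hu
          have h2 := hT.bIdx_even_iff u
          simp only [hu.rows_iff, hj, not_true_eq_false, iff_false] at h2
          omega)
      omega
    have hcell : F.Cell j k' ∧ T j k' = false := hk'.resolve_left fun h => h.1.2.1 hj
    refine ⟨k', hcell.1.2.1, hcell.1.2.2, hcell.2, fun j' hj' hj'k hT' => ?_⟩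
    by_contra hne
    have h1 := hT.bIdx_lt_of_arc (Or.inl ⟨⟨hj', hk, hj'k⟩, by simpa using hne⟩ : F.Arc T j' k)
    have h2 := hT.bIdx_lt_of_arc
      (Or.inr ⟨⟨hj', hcell.1.2.1, hj'k.trans (hkj.trans hcell.1.2.2)⟩, hT'⟩ : F.Arc T k' j')
    omega
  · rintro ⟨k', hk', hjk', hT', himp⟩
    have h1 := hT.bIdx_lt_of_arc (Or.inr ⟨⟨hj, hk', hjk'⟩, hT'⟩ : F.Arc T k' j)
    refine lt_of_le_of_lt (hT.bIdx_le_of_forall_arc hk0 ?_ fun u hu => ?_) h1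
    · simp only [hT.bIdx_even_iff, hk, hk']
    · have hcell : F.Cell u k ∧ T u k = true := hu.resolve_right fun h => hk h.1.1
      refine hT.bIdx_lt_of_arc (Or.inl
        ⟨⟨hcell.1.1, hk', hcell.1.2.2.trans (hkj.trans hjk')⟩, ?_⟩)
      by_contra hne
      simpa [hcell.2] using himp u hcell.1.1 hcell.1.2.2 (by simpa using hne)
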